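/- arXiv:2203.10329 — 2 statements merged into one kernel-verified Lean document; each statement's English description precedes it below -/
import Mathlib

section
/- Let f : ℝ^d → ℝ be L-smooth, let μ > 0, and let f_μ(x) = E_v[f(x + μ v)] be its uniform smoothing over the unit ball. Then for every x ∈ ℝ^d, ∇f_μ(x) = E_u[ (d/μ)(f(x + μ u) − f(x)) · u ], where u is drawn uniformly from the unit sphere of ℝ^d. -/
open MeasureTheory ProbabilityTheory

/-- The uniform distribution on the closed unit ball of `ℝ^d`. -/
noncomputable def uniformBall (d : ℕ) : Measure (EuclideanSpace ℝ (Fin d)) :=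
  (volume (Metric.closedBall (0 : EuclideanSpace ℝ (Fin d)) 1))⁻¹ •
    volume.restrict (Metric.closedBall (0 : EuclideanSpace ℝ (Fin d)) 1)

/-- The uniform distribution on the unit sphere of `ℝ^d`, viewed as a measure on `ℝ^d`. -/
noncomputable def uniformSphere (d : ℕ) : Measure (EuclideanSpace ℝ (Fin d)) :=
  ((volume : Measure (EuclideanSpace ℝ (Fin d))).toSphere Set.univ)⁻¹ •
    Measure.map Subtype.val (volume : Measure (EuclideanSpace ℝ (Fin d))).toSphere

section aux

open Set Metric

theorem polar_aux (d : ℕ) (hd : 0 < d) (h : (EuclideanSpace ℝ (Fin d)) → ℝ) (hi : Integrable h) :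
    ∫ v, h v = ∫ r in Ioi (0:ℝ), r ^ (d-1) *
      ∫ u, h (r • (u : EuclideanSpace ℝ (Fin d))) ∂((volume : Measure (EuclideanSpace ℝ (Fin d))).toSphere) := by
  have : Nonempty (Fin d) := ⟨⟨0, hd⟩⟩
  have hmp := (volume : Measure (EuclideanSpace ℝ (Fin d))).measurePreserving_homeomorphUnitSphereProd
  have hfr : Module.finrank ℝ (EuclideanSpace ℝ (Fin d)) = d := by simp
  rw [hfr] at hmp
  have hms : MeasurableSet ({0}ᶜ : Set (EuclideanSpace ℝ (Fin d))) := (measurableSet_singleton _).compl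
  have hms' : MeasurableEmbedding (homeomorphUnitSphereProd (EuclideanSpace ℝ (Fin d))) :=
    Homeomorph.measurableEmbedding _
  set F : (sphere (0 : EuclideanSpace ℝ (Fin d)) 1) × (Ioi (0:ℝ)) → ℝ := fun p => h (p.2.1 • p.1.1) with hF
  have hFc : ∀ y : ({0}ᶜ : Set (EuclideanSpace ℝ (Fin d))), F (homeomorphUnitSphereProd (EuclideanSpace ℝ (Fin d)) y) = h y.1 := by
    intro y
    have := congrArg Subtype.val ((homeomorphUnitSphereProd (EuclideanSpace ℝ (Fin d))).symm_apply_apply y)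
    rw [homeomorphUnitSphereProd_symm_apply_coe] at this
    simp only [hF, this]
  have e1 : ∫ v, h v = ∫ v : ({0}ᶜ : Set (EuclideanSpace ℝ (Fin d))), h v.1 ∂(volume.comap Subtype.val) := by
    rw [integral_subtype_comap hms, restrict_compl_singleton]
  have i1 : Integrable (fun v : ({0}ᶜ : Set (EuclideanSpace ℝ (Fin d))) => h v.1) (volume.comap Subtype.val) := by
    have : IntegrableOn h ({0}ᶜ) := hi.integrableOn
    exact (integrableOn_iff_comap_subtypeVal hms).1 this
  have i2 : Integrable F (((volume : Measure (EuclideanSpace ℝ (Fin d))).toSphere).prod (.volumeIoiPow (d-1))) := by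
    rw [← hmp.integrable_comp_emb hms']
    exact i1.congr (Filter.Eventually.of_forall fun y => (hFc y).symm)
  rw [e1]
  calc _ = ∫ y : ({0}ᶜ : Set (EuclideanSpace ℝ (Fin d))), F (homeomorphUnitSphereProd (EuclideanSpace ℝ (Fin d)) y) ∂(volume.comap Subtype.val) := by
        simp only [hFc]
    _ = ∫ p, F p ∂(((volume : Measure (EuclideanSpace ℝ (Fin d))).toSphere).prod (.volumeIoiPow (d-1))) :=
        hmp.integral_comp hms' _
    _ = ∫ r, ∫ u, F (u, r) ∂((volume : Measure (EuclideanSpace ℝ (Fin d))).toSphere) ∂(.volumeIoiPow (d-1)) :=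
        integral_prod_symm _ i2
    _ = _ := by
      rw [← integral_subtype_comap measurableSet_Ioi, Measure.volumeIoiPow,
        integral_withDensity_eq_integral_toReal_smul]
      · refine integral_congr_ae (Filter.Eventually.of_forall fun r => ?_)
        have : 0 < r.1 := r.2
        simp only [smul_eq_mul, hF]
        rw [ENNReal.toReal_ofReal (by positivity)]
      · fun_prop
      · simp

theorem sphere_cont (d : ℕ) (h : (EuclideanSpace ℝ (Fin d)) → ℝ) (hc : Continuous h) (w : (EuclideanSpace ℝ (Fin d)) → ℝ) (hw : Continuous w):
    Continuous fun r : ℝ => ∫ u, h (r • (u : EuclideanSpace ℝ (Fin d))) * w u ∂((volume : Measure (EuclideanSpace ℝ (Fin d))).toSphere) := by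
  have : CompactSpace (sphere (0: EuclideanSpace ℝ (Fin d)) 1) := isCompact_iff_compactSpace.1 (isCompact_sphere 0 1)
  have := continuous_parametric_integral_of_continuous (μ := (volume : Measure (EuclideanSpace ℝ (Fin d))).toSphere)
    (f := fun (r:ℝ) (u : sphere (0: EuclideanSpace ℝ (Fin d)) 1) => h (r • (u : EuclideanSpace ℝ (Fin d))) * w u) (s := univ)
    (by fun_prop) isCompact_univ
  simpa using this
  
theorem lineDeriv_psi (d : ℕ) (R : ℝ) (e v : EuclideanSpace ℝ (Fin d)) (hv : v ≠ 0) (hR : ‖v‖ ≠ R) :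
   lineDeriv ℝ (fun v : EuclideanSpace ℝ (Fin d) => max 0 (R - ‖v‖)) v (-e) = (ball 0 R).indicator (fun v => ‖v‖⁻¹ * inner ℝ v e) v := by
  rcases lt_or_gt_of_ne hR with h | h
  · have h1 : HasFDerivAt (fun v : EuclideanSpace ℝ (Fin d) => ‖v‖) (‖v‖⁻¹ • innerSL ℝ v) v := by
      have := ((hasStrictFDerivAt_norm_sq v).hasFDerivAt).sqrt (by positivity)
      simp only [Real.sqrt_sq (norm_nonneg _)] at this
      have h0 : ‖v‖ ≠ 0 := norm_ne_zero_iff.2 hv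
      have hh : (1 / (2 * ‖v‖)) • 2 • (innerSL ℝ) v = ‖v‖⁻¹ • (innerSL ℝ) v := by
        rw [← Nat.cast_smul_eq_nsmul ℝ, smul_smul]
        congr 1
        push_cast
        field_simp
      rw [hh] at this
      exact this
    have h2 := (h1.const_sub R)
    have h3 : (fun v : EuclideanSpace ℝ (Fin d) => max 0 (R - ‖v‖)) =ᶠ[nhds v] fun v => R - ‖v‖ := by
      have : ∀ᶠ w in nhds v, ‖w‖ < R := (continuous_norm.tendsto v).eventually_lt_const h
      filter_upwards [this] with w hw
      exact max_eq_right (by linarith)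
    rw [h3.lineDeriv_eq, h2.differentiableAt.lineDeriv_eq_fderiv, h2.fderiv,
      indicator_of_mem (by simpa using h)]
    simp
  · have h3 : (fun v : EuclideanSpace ℝ (Fin d) => max 0 (R - ‖v‖)) =ᶠ[nhds v] fun v => 0 := by
      have : ∀ᶠ w in nhds v, R < ‖w‖ := (continuous_norm.tendsto v).eventually_const_lt h
      filter_upwards [this] with w hw
      exact max_eq_left (by linarith)
    rw [h3.lineDeriv_eq, indicator_of_notMem (by simpa using h.le)]
    simp [lineDeriv]

theorem stepA (d : ℕ) (hd : 0 < d) (g : (EuclideanSpace ℝ (Fin d)) → ℝ) (hg : ContDiff ℝ 1 g)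
    (hgc : HasCompactSupport g) (e : EuclideanSpace ℝ (Fin d)) (R : ℝ) (hR : 0 < R) :
    ∫ r in (0:ℝ)..R, (R - r) * (r ^ (d-1) *
      ∫ u, fderiv ℝ g (r • (u : EuclideanSpace ℝ (Fin d))) e * 1 ∂((volume : Measure (EuclideanSpace ℝ (Fin d))).toSphere)) =
    ∫ r in (0:ℝ)..R, r ^ (d-1) *
      ∫ u, g (r • (u : EuclideanSpace ℝ (Fin d))) * inner ℝ (u : EuclideanSpace ℝ (Fin d)) e ∂((volume : Measure (EuclideanSpace ℝ (Fin d))).toSphere) := by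
  have : Nonempty (Fin d) := ⟨⟨0, hd⟩⟩
  obtain ⟨C, hC⟩ := hg.lipschitzWith_of_hasCompactSupport hgc (by simp)
  have hψ : LipschitzWith 1 (fun v : EuclideanSpace ℝ (Fin d) => max 0 (R - ‖v‖)) := by
    refine LipschitzWith.const_max ?_ 0
    refine LipschitzWith.of_dist_le_mul fun x y => ?_
    rw [Real.dist_eq, dist_eq_norm]
    have := abs_norm_sub_norm_le y x
    rw [norm_sub_rev] at this
    simpa using this
  have hψc : HasCompactSupport (fun v : EuclideanSpace ℝ (Fin d) => max 0 (R - ‖v‖)) := by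
    refine HasCompactSupport.of_support_subset_isCompact (isCompact_closedBall 0 R) ?_
    intro v hv
    by_contra h
    apply hv
    simp at h
    exact max_eq_left (by linarith)
  have key := LipschitzWith.integral_lineDeriv_mul_eq (μ := (volume : Measure (EuclideanSpace ℝ (Fin d)))) hC hψ hψc e
  have hgd : Continuous fun v => fderiv ℝ g v e :=
    (hg.continuous_fderiv (by simp)).clm_apply continuous_const
  have l1 : ∀ v, lineDeriv ℝ g v e = fderiv ℝ g v e := fun v =>
    ((hg.differentiable (by simp)) v).lineDeriv_eq_fderiv
  simp only [l1] at key
  have i1 : Integrable (fun v => fderiv ℝ g v e * max 0 (R - ‖v‖)) := by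
    refine Continuous.integrable_of_hasCompactSupport ?_ hψc.mul_left
    exact hgd.mul hψ.continuous
  have e2 : ∫ v, lineDeriv ℝ (fun v : EuclideanSpace ℝ (Fin d) => max 0 (R - ‖v‖)) v (-e) * g v =
      ∫ v, (ball 0 R).indicator (fun v => ‖v‖⁻¹ * inner ℝ v e) v * g v := by
    refine integral_congr_ae ?_
    have a1 : ∀ᵐ v : EuclideanSpace ℝ (Fin d), v ∉ sphere (0 : EuclideanSpace ℝ (Fin d)) R :=
      measure_eq_zero_iff_ae_notMem.1 (Measure.addHaar_sphere volume 0 R)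
    have a2 : ∀ᵐ v : EuclideanSpace ℝ (Fin d), v ∉ ({0} : Set (EuclideanSpace ℝ (Fin d))) :=
      measure_eq_zero_iff_ae_notMem.1 (measure_singleton _)
    filter_upwards [a1, a2] with v h1 h2
    rw [lineDeriv_psi d R e v (by simpa using h2) (by simpa using h1)]
  have i2 : Integrable (fun v => (ball 0 R).indicator (fun v : EuclideanSpace ℝ (Fin d) => ‖v‖⁻¹ * inner ℝ v e) v * g v) := by
    refine (hg.continuous.integrable_of_hasCompactSupport hgc).bdd_mul (c := ‖e‖) ?_ ?_
    · refine Measurable.aestronglyMeasurable ?_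
      refine Measurable.indicator ?_ measurableSet_ball
      fun_prop
    · refine Filter.Eventually.of_forall fun v => ?_
      refine (norm_indicator_le_norm_self _ _).trans ?_
      rw [norm_mul, norm_inv, norm_norm]
      rcases eq_or_ne v 0 with rfl | h
      · simp
      · have : 0 < ‖v‖ := norm_pos_iff.2 h
        rw [inv_mul_le_iff₀ this]
        exact norm_inner_le_norm v e
  rw [e2, polar_aux d hd _ i1, polar_aux d hd _ i2] at key
  have cut : ∀ (H K : ℝ → ℝ), (∀ r, 0 < r → r < R → H r = K r) → (∀ r, R < r → H r = 0) →
      ∫ r in Ioi (0:ℝ), H r = ∫ r in (0:ℝ)..R, K r := by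
    intro H K h1 h2
    rw [intervalIntegral.integral_of_le hR.le, setIntegral_eq_of_subset_of_ae_sdiff_eq_zero (s := Ioc 0 R) (t := Ioi 0) nullMeasurableSet_Ioi Ioc_subset_Ioi_self]
    · rw [integral_Ioc_eq_integral_Ioo, integral_Ioc_eq_integral_Ioo]
      exact setIntegral_congr_fun measurableSet_Ioo fun r hr => h1 r hr.1 hr.2
    · refine Filter.Eventually.of_forall fun r hr => h2 r ?_
      by_contra h
      exact hr.2 ⟨hr.1, not_lt.1 h⟩
  have nu : ∀ u : sphere (0 : EuclideanSpace ℝ (Fin d)) 1, ‖(u : EuclideanSpace ℝ (Fin d))‖ = 1 := fun u => by simp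
  refine Eq.trans (Eq.symm (cut _ _ ?_ ?_)) (key.trans (cut _ _ ?_ ?_))
  · intro r h0 h
    simp only [norm_smul, nu, Real.norm_of_nonneg h0.le, mul_one]
    rw [max_eq_right (by linarith), integral_mul_const]
    ring
  · intro r h
    have h0 : 0 < r := hR.trans h
    simp only [norm_smul, nu, Real.norm_of_nonneg h0.le, mul_one]
    rw [max_eq_left (by linarith)]
    simp
  · intro r h0 h
    congr 1
    refine integral_congr_ae (Filter.Eventually.of_forall fun u => ?_)
    simp only
    rw [indicator_of_mem (by simp [norm_smul, nu, abs_of_pos h0, h])]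
    rw [norm_smul, nu, Real.norm_of_nonneg h0.le, inner_smul_left]
    simp
    field_simp
  · intro r h
    have h0 : 0 < r := hR.trans h
    have : ∀ u : sphere (0 : EuclideanSpace ℝ (Fin d)) 1, r • (u : EuclideanSpace ℝ (Fin d)) ∉ ball (0 : EuclideanSpace ℝ (Fin d)) R := by
      intro u
      simp [norm_smul, nu, abs_of_pos h0, h.le]
    simp [this]

theorem div_cs (d : ℕ) (hd : 0 < d) (g : (EuclideanSpace ℝ (Fin d)) → ℝ) (hg : ContDiff ℝ 1 g)
    (hgc : HasCompactSupport g) (e : EuclideanSpace ℝ (Fin d)) :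
    ∫ v in closedBall (0 : EuclideanSpace ℝ (Fin d)) 1, fderiv ℝ g v e =
      ∫ u, g (u : EuclideanSpace ℝ (Fin d)) * inner ℝ (u : EuclideanSpace ℝ (Fin d)) e ∂((volume : Measure (EuclideanSpace ℝ (Fin d))).toSphere) := by
  have hgd : Continuous fun v => fderiv ℝ g v e :=
    (hg.continuous_fderiv (by simp)).clm_apply continuous_const
  have hA := stepA d hd g hg hgc e
  set p : ℝ → ℝ := fun r => r ^ (d-1) *
      ∫ u, fderiv ℝ g (r • (u : EuclideanSpace ℝ (Fin d))) e * 1 ∂((volume : Measure (EuclideanSpace ℝ (Fin d))).toSphere) with hp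
  set q : ℝ → ℝ := fun r => r ^ (d-1) *
      ∫ u, g (r • (u : EuclideanSpace ℝ (Fin d))) * inner ℝ (u : EuclideanSpace ℝ (Fin d)) e ∂((volume : Measure (EuclideanSpace ℝ (Fin d))).toSphere) with hq
  have cp : Continuous p := (continuous_pow _).mul (sphere_cont d _ hgd (fun _ => 1) continuous_const)
  have cq : Continuous q := (continuous_pow _).mul
    (sphere_cont d _ hg.continuous (fun u => inner ℝ u e) (by fun_prop))
  have cp' : Continuous fun r => r * p r := continuous_id.mul cp
  have hB : ∀ R, 0 < R → R * (∫ r in (0:ℝ)..R, p r) - ∫ r in (0:ℝ)..R, r * p r = ∫ r in (0:ℝ)..R, q r := by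
    intro R hR
    rw [← hA R hR, ← intervalIntegral.integral_const_mul, ← intervalIntegral.integral_sub]
    · congr 1
      ext r
      simp only [hp]
      ring
    · exact (continuous_const.mul cp).intervalIntegrable _ _
    · exact cp'.intervalIntegrable _ _
  have d1 := (cp.integral_hasStrictDerivAt 0 1).hasDerivAt
  have d2 := (cp'.integral_hasStrictDerivAt 0 1).hasDerivAt
  have d3 := (cq.integral_hasStrictDerivAt 0 1).hasDerivAt
  have d4 := ((hasDerivAt_id (1:ℝ)).mul d1).sub d2
  have d5 := d4.unique (d3.congr_of_eventuallyEq (by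
    filter_upwards [eventually_gt_nhds (zero_lt_one' ℝ)] with R hR
    simpa using hB R hR))
  have e1 : ∫ v in closedBall (0 : EuclideanSpace ℝ (Fin d)) 1, fderiv ℝ g v e = ∫ r in (0:ℝ)..1, p r := by
    have nu : ∀ u : sphere (0 : EuclideanSpace ℝ (Fin d)) 1, ‖(u : EuclideanSpace ℝ (Fin d))‖ = 1 := fun u => by simp
    rw [← integral_indicator measurableSet_closedBall, polar_aux d hd]
    · rw [intervalIntegral.integral_of_le zero_le_one, setIntegral_eq_of_subset_of_ae_sdiff_eq_zero (s := Ioc 0 1) (t := Ioi 0) nullMeasurableSet_Ioi Ioc_subset_Ioi_self]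
      · refine setIntegral_congr_fun measurableSet_Ioc fun r hr => ?_
        have : ∀ u : sphere (0 : EuclideanSpace ℝ (Fin d)) 1, r • (u : EuclideanSpace ℝ (Fin d)) ∈ closedBall (0 : EuclideanSpace ℝ (Fin d)) 1 := by
          intro u
          simp [norm_smul, nu, abs_of_pos hr.1, hr.2]
        simp [this, hp]
      · refine Filter.Eventually.of_forall fun r hr => ?_
        have h1 : 1 < r := by
          by_contra h
          exact hr.2 ⟨hr.1, not_lt.1 h⟩
        have : ∀ u : sphere (0 : EuclideanSpace ℝ (Fin d)) 1, r • (u : EuclideanSpace ℝ (Fin d)) ∉ closedBall (0 : EuclideanSpace ℝ (Fin d)) 1 := by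
          intro u
          simp [norm_smul, nu, abs_of_pos (zero_lt_one.trans h1), h1]
        simp [this]
    · rw [integrable_indicator_iff measurableSet_closedBall]
      exact hgd.continuousOn.integrableOn_compact (isCompact_closedBall 0 1)
  rw [e1]
  simp [hq] at d5
  linarith

theorem div_thm (d : ℕ) (hd : 0 < d) (g : (EuclideanSpace ℝ (Fin d)) → ℝ) (hg : ContDiff ℝ 1 g) (e : EuclideanSpace ℝ (Fin d)) :
    ∫ v in closedBall (0 : EuclideanSpace ℝ (Fin d)) 1, fderiv ℝ g v e =
      ∫ u, g (u : EuclideanSpace ℝ (Fin d)) * inner ℝ (u : EuclideanSpace ℝ (Fin d)) e ∂((volume : Measure (EuclideanSpace ℝ (Fin d))).toSphere) := by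
  let φ : ContDiffBump (0 : EuclideanSpace ℝ (Fin d)) := ⟨2, 3, by norm_num, by norm_num⟩
  have h1 : ContDiff ℝ 1 (fun v => φ v * g v) := φ.contDiff.mul hg
  have h2 : HasCompactSupport (fun v => φ v * g v) := φ.hasCompactSupport.mul_right
  have := div_cs d hd _ h1 h2 e
  convert this using 1
  · refine setIntegral_congr_fun measurableSet_closedBall fun v hv => ?_
    have : (fun v => φ v * g v) =ᶠ[nhds v] g := by
      have hh : ball (0 : EuclideanSpace ℝ (Fin d)) 2 ∈ nhds v := isOpen_ball.mem_nhds
        (closedBall_subset_ball (by norm_num) hv)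
      filter_upwards [hh] with w hw
      rw [φ.one_of_mem_closedBall (ball_subset_closedBall hw), one_mul]
    simp only [this.fderiv_eq]
  · refine integral_congr_ae (Filter.Eventually.of_forall fun u => ?_)
    have : (u : EuclideanSpace ℝ (Fin d)) ∈ closedBall (0 : EuclideanSpace ℝ (Fin d)) 2 := by
      have : ‖(u : EuclideanSpace ℝ (Fin d))‖ = 1 := by simp
      simp [this]
    simp only [φ.one_of_mem_closedBall this, one_mul]

end aux

/-- The two-point uniform (spherical) gradient estimator is an unbiased estimate of the gradient
of the uniform smoothing `f_μ` over the unit ball. -/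
theorem uniform_smoothing_unbiased_estimator
    (d : ℕ) (L μ : ℝ) (hμ : 0 < μ)
    (f : EuclideanSpace ℝ (Fin d) → ℝ)
    (hdiff : Differentiable ℝ f)
    (hlip : ∀ x y, ‖gradient f x - gradient f y‖ ≤ L * ‖x - y‖)
    (fμ : EuclideanSpace ℝ (Fin d) → ℝ)
    (hfμ : ∀ x, fμ x = ∫ v, f (x + μ • v) ∂(uniformBall d))
    (x : EuclideanSpace ℝ (Fin d)) :
    gradient fμ x = ∫ u, (((d : ℝ) / μ) * (f (x + μ • u) - f x)) • u ∂(uniformSphere d) := by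
  rcases Nat.eq_zero_or_pos d with rfl | hd
  · exact Subsingleton.elim _ _
  have hne : Nonempty (Fin d) := ⟨⟨0, hd⟩⟩
  have hgc : Continuous (gradient f) := by
    refine (LipschitzWith.of_dist_le_mul (K := L.toNNReal) fun x y => ?_).continuous
    rw [dist_eq_norm, dist_eq_norm]
    exact (hlip x y).trans (by gcongr; exact Real.le_coe_toNNReal L)
  have hfd : Continuous (fderiv ℝ f) := by
    have : fderiv ℝ f = fun x => InnerProductSpace.toDual ℝ _ (gradient f x) := by
      ext1 x
      simp [gradient]
    rw [this]
    exact (LinearIsometryEquiv.continuous _).comp hgc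
  have hf1 : ContDiff ℝ 1 f := contDiff_one_iff_fderiv.2 ⟨hdiff, hfd⟩
  have hfc : Continuous f := hf1.continuous
  set B := Metric.closedBall (0 : EuclideanSpace ℝ (Fin d)) 1 with hB
  set c : ℝ := ((volume B)⁻¹).toReal with hc
  have hfμ' : fμ = fun x => c * ∫ v in B, f (x + μ • v) := by
    ext y
    rw [hfμ y, uniformBall, integral_smul_measure, smul_eq_mul]
  have hcomp : IsCompact B := isCompact_closedBall 0 1
  have hder : HasFDerivAt fμ (c • ∫ v in B, fderiv ℝ f (x + μ • v)) x := by
    rw [hfμ']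
    obtain ⟨C, hC⟩ := (isCompact_closedBall x (1 + μ)).exists_bound_of_continuousOn
      hfd.continuousOn
    refine HasFDerivAt.const_mul ?_ c
    refine hasFDerivAt_integral_of_dominated_of_fderiv_le (bound := fun _ => C)
      (F := fun x v => f (x + μ • v)) (F' := fun x v => fderiv ℝ f (x + μ • v))
      (Metric.ball_mem_nhds x zero_lt_one) ?_ ?_ ?_ ?_ ?_ ?_
    · exact Filter.Eventually.of_forall fun y =>
        (by fun_prop : Continuous fun v => f (y + μ • v)).aestronglyMeasurable
    · exact (by fun_prop : Continuous fun v => f (x + μ • v)).continuousOn.integrableOn_compact hcomp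
    · exact (by fun_prop : Continuous fun v => fderiv ℝ f (x + μ • v)).aestronglyMeasurable
    · filter_upwards [ae_restrict_mem Metric.isClosed_closedBall.measurableSet] with v hv y hy
      apply hC
      rw [mem_closedBall_iff_norm]
      rw [mem_ball_iff_norm] at hy
      rw [hB, mem_closedBall_zero_iff] at hv
      calc ‖y + μ • v - x‖ = ‖(y - x) + μ • v‖ := by congr 1; abel
        _ ≤ ‖y - x‖ + ‖μ • v‖ := norm_add_le _ _
        _ ≤ 1 + μ * 1 := by
          rw [norm_smul, Real.norm_of_nonneg hμ.le]
          gcongr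
        _ = 1 + μ := by ring
    · exact integrableOn_const (hcomp.measure_lt_top.ne)
    · refine Filter.Eventually.of_forall fun v y _ => ?_
      exact (hasFDerivAt_comp_add_right (μ • v)).2 (hdiff (y + μ • v)).hasFDerivAt
  set g : EuclideanSpace ℝ (Fin d) → ℝ := fun v => f (x + μ • v) - f x with hg
  have hg1 : ContDiff ℝ 1 g := by
    refine (hf1.comp ?_).sub contDiff_const
    fun_prop
  have hgder : ∀ v e, fderiv ℝ g v e = μ * fderiv ℝ f (x + μ • v) e := by
    intro v e
    have h1 : HasFDerivAt (fun v : EuclideanSpace ℝ (Fin d) => x + μ • v)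
        (μ • ContinuousLinearMap.id ℝ _) v := ((hasFDerivAt_id v).const_smul μ).const_add x
    have h2 := ((hdiff (x + μ • v)).hasFDerivAt.comp v h1).sub_const (f x)
    have h3 : fderiv ℝ g v = _ := h2.fderiv
    rw [h3]
    simp
  have hcS : CompactSpace (Metric.sphere (0 : EuclideanSpace ℝ (Fin d)) 1) :=
    isCompact_iff_compactSpace.1 (isCompact_sphere 0 1)
  refine ext_inner_right ℝ fun e => ?_
  have lhs : inner ℝ (gradient fμ x) e = c * ∫ v in B, fderiv ℝ f (x + μ • v) e := by
    rw [gradient, InnerProductSpace.toDual_symm_apply, hder.fderiv]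
    rw [smul_apply, ContinuousLinearMap.integral_apply, smul_eq_mul]
    exact (by fun_prop : Continuous fun v => fderiv ℝ f (x + μ • v)).continuousOn.integrableOn_compact hcomp
  have hdiv := div_thm d hd g hg1 e
  simp only [hgder] at hdiv
  rw [integral_const_mul] at hdiv
  have hs : ((volume : Measure (EuclideanSpace ℝ (Fin d))).toSphere Set.univ)⁻¹.toReal
      = (d : ℝ)⁻¹ * c := by
    rw [Measure.toSphere_apply_univ, hc, hB, Measure.addHaar_closedBall_eq_addHaar_ball]
    simp
    ring
  rw [lhs, uniformSphere, integral_smul_measure, hs,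
    (MeasurableEmbedding.subtype_coe Metric.isClosed_sphere.measurableSet).integral_map,
    real_inner_comm, inner_smul_right, ← integral_inner]
  · have : ∀ u : Metric.sphere (0 : EuclideanSpace ℝ (Fin d)) 1,
        inner ℝ e ((((d : ℝ) / μ) * (f (x + μ • (u : EuclideanSpace ℝ (Fin d))) - f x)) •
          (u : EuclideanSpace ℝ (Fin d))) =
        ((d : ℝ) / μ) * (g u * inner ℝ (u : EuclideanSpace ℝ (Fin d)) e) := by
      intro u
      rw [inner_smul_right, real_inner_comm]
      simp only [hg]
      ring
    simp only [this]
    rw [integral_const_mul, ← hdiv]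
    have : (d : ℝ) ≠ 0 := by positivity
    field_simp
    rw [hB]
  · refine Continuous.integrable_of_hasCompactSupport ?_ (HasCompactSupport.of_compactSpace _)
    fun_prop
end

section
/- Let f : ℝ^d → ℝ be L-smooth, let μ > 0, and let f_μ(x) = E_v[f(x + μ v)] be its uniform smoothing over the unit ball. Then f_μ is differentiable and L-smooth, i.e., ‖∇f_μ(x) − ∇f_μ(y)‖ ≤ L‖x − y‖ for all x, y ∈ ℝ^d. -/
open MeasureTheory ProbabilityTheory

theorem uniformBall_prob (d : ℕ) : IsProbabilityMeasure (uniformBall d) := by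
  have h1 : volume (Metric.closedBall (0 : EuclideanSpace ℝ (Fin d)) 1) ≠ 0 :=
    (Metric.measure_closedBall_pos volume _ one_pos).ne'
  have h2 : volume (Metric.closedBall (0 : EuclideanSpace ℝ (Fin d)) 1) ≠ ⊤ :=
    measure_closedBall_lt_top.ne
  constructor
  simp only [uniformBall, Measure.smul_apply, Measure.restrict_apply_univ, smul_eq_mul]
  exact ENNReal.inv_mul_cancel h1 h2

theorem uniformBall_ae (d : ℕ) : ∀ᵐ v ∂(uniformBall d), ‖v‖ ≤ 1 := by
  apply Measure.ae_smul_measure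
  filter_upwards [ae_restrict_mem Metric.isClosed_closedBall.measurableSet] with v hv
  simpa using hv

theorem uniformBall_int {E : Type*} [NormedAddCommGroup E] (d : ℕ)
    (g : EuclideanSpace ℝ (Fin d) → E) (hg : Continuous g) :
    Integrable g (uniformBall d) := by
  have h1 : volume (Metric.closedBall (0 : EuclideanSpace ℝ (Fin d)) 1) ≠ 0 :=
    (Metric.measure_closedBall_pos volume _ one_pos).ne'
  apply Integrable.smul_measure _ (ENNReal.inv_ne_top.2 h1)
  exact hg.continuousOn.integrableOn_compact (isCompact_closedBall _ _)

theorem norm_gradient_sub {d : ℕ} (f : EuclideanSpace ℝ (Fin d) → ℝ)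
    (x y : EuclideanSpace ℝ (Fin d)) :
    ‖gradient f x - gradient f y‖ = ‖fderiv ℝ f x - fderiv ℝ f y‖ := by
  unfold gradient
  rw [← map_sub, LinearIsometryEquiv.norm_map]

/-- The uniform smoothing `f_μ` over the unit ball of an `L`-smooth function is differentiable
and `L`-smooth. -/
theorem uniform_smoothing_is_L_smooth
    (d : ℕ) (L μ : ℝ) (hμ : 0 < μ)
    (f : EuclideanSpace ℝ (Fin d) → ℝ)
    (hdiff : Differentiable ℝ f)
    (hlip : ∀ x y, ‖gradient f x - gradient f y‖ ≤ L * ‖x - y‖)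
    (fμ : EuclideanSpace ℝ (Fin d) → ℝ)
    (hfμ : ∀ x, fμ x = ∫ v, f (x + μ • v) ∂(uniformBall d)) :
    Differentiable ℝ fμ ∧ ∀ x y, ‖gradient fμ x - gradient fμ y‖ ≤ L * ‖x - y‖ := by
  have := uniformBall_prob d
  simp only [norm_gradient_sub] at hlip ⊢
  have hc : Continuous (fderiv ℝ f) := by
    have : LipschitzWith (Real.nnabs L) (fderiv ℝ f) := by
      apply LipschitzWith.of_dist_le_mul
      intro x y
      rw [dist_eq_norm, dist_eq_norm]
      refine (hlip x y).trans ?_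
      simp only [Real.coe_nnabs]
      gcongr
      exact le_abs_self L
    exact this.continuous
  have key : ∀ x, HasFDerivAt fμ (∫ v, fderiv ℝ f (x + μ • v) ∂(uniformBall d)) x := by
    intro x
    rw [funext hfμ]
    have hfc := hdiff.continuous
    refine hasFDerivAt_integral_of_dominated_of_fderiv_le
      (F := fun x v => f (x + μ • v)) (F' := fun x v => fderiv ℝ f (x + μ • v))
      (bound := fun _ => ‖fderiv ℝ f x‖ + |L| * (1 + μ))
      (Metric.ball_mem_nhds x one_pos) ?_ ?_ ?_ ?_ (integrable_const _) ?_
    · exact Filter.Eventually.of_forall fun y =>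
        (uniformBall_int d _ (by fun_prop)).aestronglyMeasurable
    · exact uniformBall_int d _ (by fun_prop)
    · exact (uniformBall_int d _ (by fun_prop)).aestronglyMeasurable
    · filter_upwards [uniformBall_ae d] with v hv y hy
      have h1 := hlip (y + μ • v) x
      have h2 : ‖y + μ • v - x‖ ≤ 1 + μ := by
        have : y + μ • v - x = (y - x) + μ • v := by abel
        rw [this]
        refine (norm_add_le _ _).trans ?_
        rw [norm_smul, Real.norm_of_nonneg hμ.le]
        rw [mem_ball_iff_norm] at hy
        nlinarith
      have h3 : L * ‖y + μ • v - x‖ ≤ |L| * (1 + μ) :=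
        mul_le_mul (le_abs_self L) h2 (norm_nonneg _) (abs_nonneg L)
      have h4 := norm_le_norm_add_norm_sub' (fderiv ℝ f (y + μ • v)) (fderiv ℝ f x)
      linarith
    · refine Filter.Eventually.of_forall fun v y _ => ?_
      exact (hasFDerivAt_comp_add_right (μ • v)).2 (hdiff (y + μ • v)).hasFDerivAt
  refine ⟨fun x => (key x).differentiableAt, fun x y => ?_⟩
  rw [(key x).fderiv, (key y).fderiv, ← integral_sub (uniformBall_int d _ (by fun_prop))
    (uniformBall_int d _ (by fun_prop))]
  refine (norm_integral_le_of_norm_le_const (C := L * ‖x - y‖)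
    (Filter.Eventually.of_forall fun v => ?_)).trans ?_
  · simpa using hlip (x + μ • v) (y + μ • v)
  · simp
end
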